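/- Let V = ℝ^m with m ≥ 3 and let A ∈ 𝔄(V) be projectively flat and Ricci symmetric. Then there exists a smooth torsion-free connection ∇ on ℝ^m which is both projectively flat (P(R^∇_P) = 0 for all P) and Ricci symmetric (the Ricci tensor of R^∇_P is symmetric for all P), whose curvature at the origin equals A. -/

import Mathlib

/-!
A projectively flat, Ricci symmetric tensor is `A = H(S)` with `S = -(m - 1)⁻¹ ρ(A)` symmetric.
Take the connection projectively equivalent to the flat one through a closed `1`-form `θ`,
`Γ_{ij}^k = θ_i δ_j^k + θ_j δ_i^k`. Its curvature at every point is `H(∂θ - θ ⊗ θ)`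
(`curv_chris`), where `∂θ - θ ⊗ θ` is symmetric since `θ` is closed. An operator `H(Θ)` with `Θ`
symmetric has Ricci tensor `-(m - 1) Θ` (`ricC_HC`), so it is Ricci symmetric and projectively
flat (`PC_HC`). Choosing `θ` linear, `θ_i = ∑ₐ S_{ia} x_a`, gives `∂θ = S` everywhere and
`θ = 0` at the origin, hence curvature `H(S) = A` there.
-/


noncomputable section

/-- The curvature operator `R_{ijk}{}^l` at `P` of the torsion-free connection on `ℝ^m`
with Christoffel symbols `Γ`:
`R_{ijk}{}^l = ∂_{x_i}Γ_{jk}{}^l - ∂_{x_j}Γ_{ik}{}^l + Γ_{in}{}^l Γ_{jk}{}^n - Γ_{jn}{}^l Γ_{ik}{}^n`. -/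
def curv {m : ℕ} (Γ : (Fin m → ℝ) → Fin m → Fin m → Fin m → ℝ) (P : Fin m → ℝ)
    (i j k l : Fin m) : ℝ :=
  fderiv ℝ (fun x => Γ x j k l) P (Pi.single i 1)
    - fderiv ℝ (fun x => Γ x i k l) P (Pi.single j 1)
    + ∑ n, (Γ P i n l * Γ P j k n - Γ P j n l * Γ P i k n)

/-- The Ricci tensor `ρ_{jk} = R_{ijk}{}^i` of a curvature tensor given in components. -/
def ricC {m : ℕ} (R : Fin m → Fin m → Fin m → Fin m → ℝ) (j k : Fin m) : ℝ :=
  ∑ i, R i j k i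

/-- Components of `H(Θ)(x,y)z = Θ(x,y)z - Θ(y,x)z + Θ(x,z)y - Θ(y,z)x`. -/
def HC {m : ℕ} (Θ : Fin m → Fin m → ℝ) (i j k l : Fin m) : ℝ :=
  Θ i j * (if k = l then 1 else 0) - Θ j i * (if k = l then 1 else 0)
    + Θ i k * (if j = l then 1 else 0) - Θ j k * (if i = l then 1 else 0)

/-- Components of the Weyl projective curvature operator
`P(A) = A + (1/(m-1)) H(ρ_s(A)) + (1/(m+1)) H(ρ_a(A))`. -/
def PC {m : ℕ} (A : Fin m → Fin m → Fin m → Fin m → ℝ) (i j k l : Fin m) : ℝ :=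
  A i j k l
    + ((m : ℝ) - 1)⁻¹ * HC (fun a b => (ricC A a b + ricC A b a) / 2) i j k l
    + ((m : ℝ) + 1)⁻¹ * HC (fun a b => (ricC A a b - ricC A b a) / 2) i j k l

/-- The linear `1`-form `θ_i = ∑ₐ S_{ia} x_a`, which is closed when `S` is symmetric. -/
def linForm {m : ℕ} (S : Fin m → Fin m → ℝ) (x : Fin m → ℝ) (i : Fin m) : ℝ :=
  ∑ a, S i a * x a

/-- The Christoffel symbols `θ_i δ_j^k + θ_j δ_i^k` of the connection projectively equivalent to
the flat one through `θ = linForm S`. -/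
def chris {m : ℕ} (S : Fin m → Fin m → ℝ) (x : Fin m → ℝ) (i j k : Fin m) : ℝ :=
  linForm S x i * (if j = k then 1 else 0) + linForm S x j * (if i = k then 1 else 0)

lemma ricC_HC {m : ℕ} (Θ : Fin m → Fin m → ℝ) (hΘ : ∀ a b, Θ a b = Θ b a) (j k : Fin m) :
    ricC (HC Θ) j k = -((m : ℝ) - 1) * Θ j k := by
  simp only [ricC, HC, Finset.sum_sub_distrib, Finset.sum_add_distrib, mul_ite, mul_one, mul_zero,
    Finset.sum_ite_eq, Finset.mem_univ, if_true, Finset.sum_const, Finset.card_univ,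
    Fintype.card_fin, nsmul_eq_mul]
  rw [hΘ k j]
  ring

lemma PC_HC {m : ℕ} (hm : 3 ≤ m) (Θ : Fin m → Fin m → ℝ) (hΘ : ∀ a b, Θ a b = Θ b a)
    (i j k l : Fin m) : PC (HC Θ) i j k l = 0 := by
  have h1 : (m : ℝ) - 1 ≠ 0 := by
    have : (3 : ℝ) ≤ m := by exact_mod_cast hm
    linarith
  simp only [PC, ricC_HC Θ hΘ]
  simp only [HC, hΘ j i, hΘ k i, hΘ k j]
  field_simp
  ring

lemma contDiff_linForm {m : ℕ} (S : Fin m → Fin m → ℝ) (i : Fin m) :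
    ContDiff ℝ (⊤ : ℕ∞) fun x => linForm S x i := by
  unfold linForm
  fun_prop

lemma hasFDerivAt_linForm {m : ℕ} (S : Fin m → Fin m → ℝ) (i : Fin m) (P : Fin m → ℝ) :
    HasFDerivAt (fun x => linForm S x i)
      (∑ a, S i a • (ContinuousLinearMap.proj a : (Fin m → ℝ) →L[ℝ] ℝ)) P := by
  unfold linForm
  exact HasFDerivAt.fun_sum fun a _ => (hasFDerivAt_apply a P).const_mul (S i a)

lemma fderiv_chris {m : ℕ} (S : Fin m → Fin m → ℝ) (P : Fin m → ℝ) (i j k l : Fin m) :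
    fderiv ℝ (fun x => chris S x j k l) P (Pi.single i 1) =
      S j i * (if k = l then 1 else 0) + S k i * (if j = l then 1 else 0) := by
  have h := ((hasFDerivAt_linForm S j P).mul_const (if k = l then (1 : ℝ) else 0)).add
    ((hasFDerivAt_linForm S k P).mul_const (if j = l then (1 : ℝ) else 0))
  have h' : fderiv ℝ (fun x => chris S x j k l) P = _ := h.fderiv
  rw [h']
  split_ifs <;> simp [Pi.single_apply]

/-- The curvature of `chris S` is `H(∂θ - θ ⊗ θ)`, where `∂θ = S`. -/
lemma curv_chris {m : ℕ} (S : Fin m → Fin m → ℝ) (hS : ∀ a b, S a b = S b a) (P : Fin m → ℝ) :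
    curv (chris S) P = HC fun a b => S a b - linForm S P a * linForm S P b := by
  funext i j k l
  -- Contracting `Γ Γ` over the inner index only uses `∑ₙ δ_n^l f_n = f_l`.
  have hq : ∀ i j, ∑ n, chris S P i n l * chris S P j k n =
      linForm S P i * linForm S P j * (if k = l then 1 else 0)
        + linForm S P i * linForm S P k * (if j = l then 1 else 0)
        + 2 * (linForm S P j * linForm S P k) * (if i = l then 1 else 0) := by
    intro i j
    simp only [chris, add_mul, mul_add, Finset.sum_add_distrib, mul_ite, ite_mul, mul_one,
      mul_zero, zero_mul, Finset.sum_ite_eq, Finset.sum_ite_eq', Finset.mem_univ, if_true]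
    split_ifs <;> ring
  rw [curv, fderiv_chris, fderiv_chris, Finset.sum_sub_distrib, hq, hq]
  simp only [HC, hS j i, hS k i, hS k j]
  ring

/-- **Theorem 1.7 (2).** A projectively flat, Ricci symmetric generalized algebraic
curvature operator on `ℝ^m` (`m ≥ 3`) is geometrically realizable by a smooth torsion-free
connection which is projectively flat and Ricci symmetric at every point and whose
curvature at the origin equals `A`. -/
theorem projectively_flat_ricci_symmetric_realization
    (m : ℕ) (hm : 3 ≤ m)
    (A : Fin m → Fin m → Fin m → Fin m → ℝ)
    (hanti : ∀ i j k l, A i j k l = - A j i k l)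
    (hbianchi : ∀ i j k l, A i j k l + A j k i l + A k i j l = 0)
    (hflat : ∀ i j k l, PC A i j k l = 0)
    (hricci : ∀ i j, ricC A i j = ricC A j i) :
    ∃ Γ : (Fin m → ℝ) → Fin m → Fin m → Fin m → ℝ,
      (∀ i j k, ContDiff ℝ (⊤ : ℕ∞) fun x => Γ x i j k) ∧
      (∀ x i j k, Γ x i j k = Γ x j i k) ∧
      (∀ (P : Fin m → ℝ) (i j k l : Fin m), PC (curv Γ P) i j k l = 0) ∧
      (∀ (P : Fin m → ℝ) (j k : Fin m), ricC (curv Γ P) j k = ricC (curv Γ P) k j) ∧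
      (∀ i j k l, curv Γ 0 i j k l = A i j k l) := by
  have hflat' : ∀ i j k l, A i j k l = HC (fun a b => -((m : ℝ) - 1)⁻¹ * ricC A a b) i j k l := by
    intro i j k l
    have h := hflat i j k l
    simp only [PC, HC, hricci j i, hricci k i, hricci k j] at h ⊢
    linear_combination h
  have hS : ∀ a b, -((m : ℝ) - 1)⁻¹ * ricC A a b = -((m : ℝ) - 1)⁻¹ * ricC A b a :=
    fun a b => by rw [hricci a b]
  generalize hSdef : (fun a b => -((m : ℝ) - 1)⁻¹ * ricC A a b) = S at hflat'
  replace hS : ∀ a b, S a b = S b a := by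
    subst hSdef
    exact hS
  have hΨ : ∀ (P : Fin m → ℝ) (a b : Fin m), S a b - linForm S P a * linForm S P b =
      S b a - linForm S P b * linForm S P a := fun P a b => by rw [hS a b, mul_comm]
  refine ⟨chris S, fun i j k => ?_, fun x i j k => add_comm _ _, fun P i j k l => ?_,
    fun P j k => ?_, fun i j k l => ?_⟩
  · exact ((contDiff_linForm S i).mul contDiff_const).add
      ((contDiff_linForm S j).mul contDiff_const)
  · rw [curv_chris S hS]
    exact PC_HC hm _ (hΨ P) i j k l
  · rw [curv_chris S hS, ricC_HC _ (hΨ P), ricC_HC _ (hΨ P), hΨ P]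
  · rw [curv_chris S hS, hflat']
    simp [linForm]
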